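/- arXiv:2005.08585 — 2 statements merged into one kernel-verified Lean document; each statement's English description precedes it below -/
import Mathlib

section
/- Let (J_n) be a convex exhaustion in ℝ^d (p(J_n) → ∞, p(J_n)^{-1/(d−1)}J_n → J_∞ in Hausdorff metric, p(J_∞) = 1) and I a convex body with 0 ∈ I and finite diameter D = diam(I). Then limsup_n card((J_n \ (J_n ⊖ I)) ∩ ℤ^d)/p(J_n) ≤ D + √d. -/
open Set MeasureTheory Metric Filter Topology Pointwise

/-- Perimeter: the `(d-1)`-dimensional Hausdorff measure of the boundary. -/
noncomputable def per {d : ℕ} (J : Set (EuclideanSpace ℝ (Fin d))) : ℝ :=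
  (μH[(d : ℝ) - 1] (frontier J)).toReal

/-- The lattice points: points of `ℝ^d` with all coordinates integers. -/
def IsLatticePt {d : ℕ} (x : EuclideanSpace ℝ (Fin d)) : Prop :=
  ∀ i, ∃ n : ℤ, x i = (n : ℝ)

/-- Erosion `J ⊖ I = {x | ∀ i ∈ I, x + i ∈ J}`. -/
def erode {d : ℕ} (J I : Set (EuclideanSpace ℝ (Fin d))) : Set (EuclideanSpace ℝ (Fin d)) :=
  {x | ∀ i ∈ I, x + i ∈ J}

/-- A preconnected set meeting both a set and its complement meets the frontier of that set. -/
theorem IsPreconnected.inter_frontier_nonempty {X : Type*} [TopologicalSpace X] {s t : Set X}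
    (hs : IsPreconnected s) (hin : (s ∩ t).Nonempty) (hout : (s ∩ tᶜ).Nonempty) :
    (s ∩ frontier t).Nonempty := by
  by_contra hempty
  have hnot : ∀ x ∈ s, x ∉ frontier t := fun x hxs hx => hempty ⟨x, hxs, hx⟩
  obtain ⟨x, hxs, hxt⟩ := hin
  obtain ⟨y, hys, hyt⟩ := hout
  obtain ⟨w, -, hw, hw'⟩ := hs (interior t) (closure t)ᶜ isOpen_interior
    isClosed_closure.isOpen_compl
    (fun a ha => by
      by_contra hcon
      rw [mem_union, mem_compl_iff, not_or, not_not] at hcon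
      exact hnot a ha ⟨hcon.2, hcon.1⟩)
    ⟨x, hxs, by_contra fun hx => hnot x hxs ⟨subset_closure hxt, hx⟩⟩
    ⟨y, hys, fun hy => hnot y hys ⟨hy, fun hy' => hyt (interior_subset hy')⟩⟩
  exact hw' (interior_subset.trans subset_closure hw)

/-- The perimeter, in any dimension of Hausdorff measure, is monotone on convex sets. -/
theorem Convex.hausdorffMeasure_frontier_mono {E : Type*} [NormedAddCommGroup E]
    [InnerProductSpace ℝ E] [CompleteSpace E] [MeasurableSpace E] [BorelSpace E] {K L : Set E}
    (hKconv : Convex ℝ K) (hKclosed : IsClosed K) (hKint : (interior K).Nonempty)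
    (hKL : K ⊆ L) (hL : Bornology.IsBounded L) {s : ℝ} (hs : 0 ≤ s) :
    μH[s] (frontier K) ≤ μH[s] (frontier L) := by
  have hout : ∀ y : frontier K, ∃ z ∈ frontier L, ∀ a ∈ K, inner ℝ (z - y) (a - y) ≤ 0 := by
    rintro ⟨y, hy⟩
    obtain ⟨f, hf⟩ := geometric_hahn_banach_open_point hKconv.interior isOpen_interior hy.2
    have hfK : ∀ a ∈ K, f a ≤ f y := by
      have hcl : closure (interior K) ⊆ {a | f a ≤ f y} :=
        closure_minimal (fun a ha => (hf a ha).le) (isClosed_le f.continuous continuous_const)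
      intro a ha
      refine hcl ?_
      rw [hKconv.closure_interior_eq_closure_of_nonempty_interior hKint]
      exact subset_closure ha
    set u := (InnerProductSpace.toDual ℝ E).symm f with hu
    have hfu : ∀ x, f x = inner ℝ u x := fun x => by simp [hu]
    have hu0 : u ≠ 0 := by
      obtain ⟨a, ha⟩ := hKint
      intro h0
      have := hf a ha
      simp [hfu, h0] at this
    let g : ℝ → E := fun t => y + t • u
    have hg : Continuous g := by fun_prop
    have hyK : y ∈ K := hKclosed.frontier_subset hy
    obtain ⟨R, hR⟩ := hL.exists_norm_le
    have hfar : g ((R + 1 + ‖y‖) / ‖u‖) ∉ L := by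
      intro hmem
      have h1 := hR _ hmem
      have hR0 : 0 ≤ R := (norm_nonneg y).trans (hR y (hKL hyK))
      have hupos : 0 < ‖u‖ := norm_pos_iff.2 hu0
      have h2 : ‖((R + 1 + ‖y‖) / ‖u‖) • u‖ = R + 1 + ‖y‖ := by
        rw [norm_smul, Real.norm_of_nonneg (by positivity)]
        field_simp
      have h3 : ‖((R + 1 + ‖y‖) / ‖u‖) • u‖ ≤ ‖g ((R + 1 + ‖y‖) / ‖u‖)‖ + ‖y‖ := by
        have := norm_sub_le (g ((R + 1 + ‖y‖) / ‖u‖)) y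
        simpa [g] using this
      linarith
    have hR0 : 0 ≤ (R + 1 + ‖y‖) / ‖u‖ := by
      have hR0 : 0 ≤ R := (norm_nonneg y).trans (hR y (hKL hyK))
      positivity
    have hpre : IsPreconnected (g '' Ici 0) := isPreconnected_Ici.image g hg.continuousOn
    obtain ⟨z, ⟨t, ht, rfl⟩, hz⟩ := hpre.inter_frontier_nonempty
      (t := L) ⟨y, ⟨0, by simp, by simp [g]⟩, hKL hyK⟩ ⟨_, ⟨_, hR0, rfl⟩, hfar⟩
    refine ⟨_, hz, fun a ha => ?_⟩
    have h1 := hfK a ha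
    rw [hfu, hfu] at h1
    simp only [g, add_sub_cancel_left, real_inner_smul_left, inner_sub_right]
    exact sub_nonpos.2 (mul_le_mul_of_nonneg_left h1 ht)
  choose z hzL hz using hout
  have hanti : AntilipschitzWith 1 z := by
    refine AntilipschitzWith.of_le_mul_dist fun a b => ?_
    rw [NNReal.coe_one, one_mul, Subtype.dist_eq, dist_eq_norm, dist_eq_norm]
    have h1 := hz a b (hKclosed.frontier_subset b.2)
    have h2 := hz b a (hKclosed.frontier_subset a.2)
    have h3 : ‖(a : E) - b‖ * ‖(a : E) - b‖ ≤ inner ℝ (z a - z b) ((a : E) - b) := by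
      rw [← real_inner_self_eq_norm_mul_norm]
      simp only [inner_sub_left, inner_sub_right] at *
      linarith
    have h4 := h3.trans (real_inner_le_norm _ _)
    by_contra! hlt
    nlinarith [norm_nonneg (z a - z b)]
  calc μH[s] (frontier K) = μH[s] ((↑) '' (univ : Set (frontier K)) : Set E) := by simp
    _ = μH[s] (univ : Set (frontier K)) := isometry_subtype_coe.hausdorffMeasure_image (.inl hs) _
    _ ≤ μH[s] (z '' univ) := by simpa using hanti.le_hausdorffMeasure_image hs univ
    _ ≤ μH[s] (frontier L) := measure_mono (by rintro _ ⟨a, -, rfl⟩; exact hzL a)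

/-- A prism of height `r` over a set `F` in a hyperplane has volume at most `r` times the
Hausdorff measure of `F`. -/
theorem volume_prism_le {k : ℕ} {u : EuclideanSpace ℝ (Fin (k + 1))} (hu : ‖u‖ = 1) {h r : ℝ}
    {F : Set (EuclideanSpace ℝ (Fin (k + 1)))} (hF : ∀ y ∈ F, inner ℝ u y = h) :
    volume {x | ∃ y ∈ F, ∃ s ∈ Icc 0 r, x = y - s • u} ≤ ENNReal.ofReal r * μH[k] F := by
  obtain ⟨b, hb⟩ := Orthonormal.exists_orthonormalBasis_extension_of_card_eq
    (𝕜 := ℝ) (E := EuclideanSpace ℝ (Fin (k + 1))) (ι := Fin (k + 1)) (by simp)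
    (v := fun _ => u) (s := {0}) (by
      rw [orthonormal_iff_ite]
      rintro ⟨i, rfl⟩ ⟨j, rfl⟩
      simp [hu])
  have hb0 : b 0 = u := hb 0 rfl
  let e : EuclideanSpace ℝ (Fin (k + 1)) → ℝ × (Fin k → ℝ) := fun x =>
    MeasurableEquiv.piFinSuccAbove (fun _ => ℝ) 0 (WithLp.ofLp (b.repr x))
  have he : MeasurePreserving e :=
    (volume_preserving_piFinSuccAbove (fun _ => ℝ) 0).comp
      ((PiLp.volume_preserving_ofLp (Fin (k + 1))).comp b.measurePreserving_repr)
  have he1 : ∀ x, (e x).1 = inner ℝ u x := fun x => by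
    simp [e, ← hb0, b.repr_apply_apply]
  have he2 : ∀ x i, (e x).2 i = inner ℝ (b i.succ) x := fun x i => by
    simp [e, Fin.tail, b.repr_apply_apply]
  have hlip : LipschitzWith 1 fun x => (e x).2 := by
    refine LipschitzWith.of_dist_le_mul fun x y => ?_
    rw [NNReal.coe_one, one_mul]
    refine (dist_pi_le_iff dist_nonneg).2 fun i => ?_
    rw [he2, he2, Real.dist_eq, ← inner_sub_right, dist_eq_norm]
    simpa using abs_real_inner_le_norm (b i.succ) (x - y)
  have hsub : {x | ∃ y ∈ F, ∃ s ∈ Icc 0 r, x = y - s • u} ⊆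
      e ⁻¹' (Icc (h - r) h ×ˢ ((fun x => (e x).2) '' F)) := by
    rintro _ ⟨y, hy, s, hs, rfl⟩
    refine ⟨?_, y, hy, ?_⟩
    · rw [he1, inner_sub_right, hF y hy, inner_smul_right, real_inner_self_eq_norm_sq, hu]
      constructor <;> linarith [hs.1, hs.2]
    · ext i
      have h0 : inner ℝ (b i.succ) u = 0 := by
        rw [← hb0]
        exact b.orthonormal.2 (Fin.succ_ne_zero i)
      simp only [he2, inner_sub_right, inner_smul_right, h0]
      ring
  have hvol : volume ((fun x => (e x).2) '' F) ≤ μH[k] F := by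
    rw [← hausdorffMeasure_pi_real]
    simpa using hlip.hausdorffMeasure_image_le (d := k) (by positivity) F
  have hemb : MeasurableEmbedding e :=
    (MeasurableEquiv.measurableEmbedding _).comp
      ((MeasurableEquiv.measurableEmbedding (MeasurableEquiv.toLp 2 (Fin (k + 1) → ℝ)).symm).comp
      b.measurableEquiv.measurableEmbedding)
  calc _ ≤ volume (e ⁻¹' (Icc (h - r) h ×ˢ ((fun x => (e x).2) '' F))) := measure_mono hsub
    _ = ENNReal.ofReal r * volume ((fun x => (e x).2) '' F) := by
      rw [he.measure_preimage_emb hemb, Measure.volume_eq_prod, Measure.prod_prod, Real.volume_Icc]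
      congr 2
      ring
    _ ≤ _ := by gcongr

/-- The inner collar of depth `r` of a polyhedron has volume at most `r` times the perimeter. -/
theorem volume_collar_le {k : ℕ} (T : Finset (EuclideanSpace ℝ (Fin (k + 1))))
    (hT : ∀ u ∈ T, ‖u‖ = 1) (h : EuclideanSpace ℝ (Fin (k + 1)) → ℝ) (r : ℝ) :
    volume {x | (∀ u ∈ T, inner ℝ u x ≤ h u) ∧ ∃ u ∈ T, h u - inner ℝ u x ≤ r} ≤
      ENNReal.ofReal r * μH[k] (frontier {x | ∀ u ∈ T, inner ℝ u x ≤ h u}) := by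
  set P := {x | ∀ u ∈ T, inner ℝ u x ≤ h u}
  let F : EuclideanSpace ℝ (Fin (k + 1)) → Set (EuclideanSpace ℝ (Fin (k + 1))) := fun u =>
    {y | inner ℝ u y = h u} ∩ ⋂ v ∈ T.erase u, {y | inner ℝ v y < h v}
  have hFmeas : ∀ u, MeasurableSet (F u) := fun u =>
    (isClosed_eq (by fun_prop) continuous_const).measurableSet.inter
      ((T.erase u).measurableSet_biInter fun v _ =>
        (isOpen_lt (by fun_prop) continuous_const).measurableSet)
  have hFdisj : (T : Set (EuclideanSpace ℝ (Fin (k + 1)))).PairwiseDisjoint F := by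
    intro u hu v hv huv
    refine disjoint_left.2 fun y hyu hyv => ?_
    have h1 := mem_iInter₂.1 hyv.2 u (Finset.mem_erase.2 ⟨huv, hu⟩)
    exact absurd hyu.1 (ne_of_lt h1)
  have hFfr : ∀ u ∈ T, F u ⊆ frontier P := by
    intro u hu y hy
    have hyP : y ∈ P := fun v hv => by
      by_cases hvu : v = u
      · rw [hvu]; exact hy.1.le
      · exact (mem_iInter₂.1 hy.2 v (Finset.mem_erase.2 ⟨hvu, hv⟩)).le
    refine ⟨subset_closure hyP, fun hyint => ?_⟩
    have hlim : Tendsto (fun t : ℝ => y + t • u) (𝓝[>] 0) (𝓝 y) := by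
      have : Continuous fun t : ℝ => y + t • u := by fun_prop
      simpa using (this.tendsto 0).mono_left nhdsWithin_le_nhds
    obtain ⟨t, htP, ht⟩ := ((hlim.eventually (mem_interior_iff_mem_nhds.1 hyint)).and
      self_mem_nhdsWithin).exists
    have h1 := htP u hu
    rw [inner_add_right, hy.1, inner_smul_right, real_inner_self_eq_norm_sq, hT u hu] at h1
    have : (0 : ℝ) < t := ht
    linarith
  have hhyp : ∀ u ∈ T, volume {x | inner ℝ u x = h u} = 0 := by
    intro u hu
    have h1 := volume_prism_le (hT u hu) (r := 0) (h := h u) (F := {x | inner ℝ u x = h u})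
      fun y hy => hy
    simpa using h1
  have hcover : {x | x ∈ P ∧ ∃ u ∈ T, h u - inner ℝ u x ≤ r} ⊆
      (⋃ u ∈ T, {x | inner ℝ u x = h u}) ∪
        ⋃ u ∈ T, {x | ∃ y ∈ F u, ∃ s ∈ Icc 0 r, x = y - s • u} := by
    rintro x ⟨hxP, w, hw, hwr⟩
    obtain ⟨u, hu, hmin⟩ := T.exists_min_image (fun u => h u - inner ℝ u x) ⟨w, hw⟩
    rcases (hxP u hu).eq_or_lt with heq | hlt
    · exact Or.inl (mem_biUnion hu heq)
    refine Or.inr (mem_biUnion hu ⟨x + (h u - inner ℝ u x) • u, ⟨?_, ?_⟩,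
      h u - inner ℝ u x, ⟨by linarith, (hmin w hw).trans hwr⟩, by simp⟩)
    · rw [mem_ofPred_eq, inner_add_right, inner_smul_right, real_inner_self_eq_norm_sq, hT u hu]
      ring
    · refine mem_iInter₂.2 fun v hv => ?_
      obtain ⟨hvu, hv⟩ := Finset.mem_erase.1 hv
      have h1 : inner ℝ v u < 1 := (inner_lt_one_iff_real_of_norm_eq_one (hT v hv) (hT u hu)).2 hvu
      have h2 := hmin v hv
      rw [mem_ofPred_eq, inner_add_right, inner_smul_right]
      nlinarith
  calc _ ≤ _ := measure_mono hcover
    _ ≤ 0 + ∑ u ∈ T, ENNReal.ofReal r * μH[k] (F u) := by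
      refine (measure_union_le _ _).trans (add_le_add ?_ ?_)
      · exact ((measure_biUnion_null_iff T.countable_toSet).2 hhyp).le
      · exact (measure_biUnion_finset_le _ _).trans
          (Finset.sum_le_sum fun u hu => volume_prism_le (hT u hu) fun y hy => hy.1)
    _ = ENNReal.ofReal r * μH[k] (⋃ u ∈ T, F u) := by
      rw [zero_add, ← Finset.mul_sum, measure_biUnion_finset hFdisj fun u _ => hFmeas u]
    _ ≤ _ := by
      gcongr
      exact iUnion₂_subset hFfr

/-- A point outside a closed convex set is strictly separated from it by a unit vector. -/
theorem exists_unit_separating {E : Type*} [NormedAddCommGroup E] [InnerProductSpace ℝ E]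
    [CompleteSpace E] {K : Set E} (hKconv : Convex ℝ K) (hKclosed : IsClosed K)
    (hKne : K.Nonempty) {x : E} (hx : x ∉ K) :
    ∃ u : E, ‖u‖ = 1 ∧ ∃ c : ℝ, (∀ a ∈ K, inner ℝ u a ≤ c) ∧ c < inner ℝ u x := by
  obtain ⟨f, c, hfK, hfx⟩ := geometric_hahn_banach_closed_point hKconv hKclosed hx
  set u := (InnerProductSpace.toDual ℝ E).symm f with hu
  have hfu : ∀ x, f x = inner ℝ u x := fun x => by simp [hu]
  have hu0 : 0 < ‖u‖ := by
    rw [norm_pos_iff]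
    intro h0
    obtain ⟨a, ha⟩ := hKne
    have := (hfK a ha).trans hfx
    simp [hfu, h0] at this
  refine ⟨‖u‖⁻¹ • u, norm_smul_inv_norm (𝕜 := ℝ) (norm_pos_iff.1 hu0), ‖u‖⁻¹ * c,
    fun a ha => ?_, ?_⟩
  · rw [real_inner_smul_left, ← hfu]
    exact mul_le_mul_of_nonneg_left (hfK a ha).le (by positivity)
  · rw [real_inner_smul_left, ← hfu]
    exact mul_lt_mul_of_pos_left hfx (by positivity)

/-- A convex set at Hausdorff distance less than `ρ / 2` from a set containing the ball of
radius `ρ` contains the ball of radius `ρ / 2`. -/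
theorem Convex.closedBall_subset_of_hausdorffDist_lt {E : Type*} [NormedAddCommGroup E]
    [InnerProductSpace ℝ E] [CompleteSpace E] {A B : Set E} {ρ : ℝ} (hρ : 0 ≤ ρ)
    (hBconv : Convex ℝ B) (hBclosed : IsClosed B) (hBne : B.Nonempty)
    (hA : closedBall 0 ρ ⊆ A) (hdist : hausdorffDist B A < ρ / 2)
    (hfin : hausdorffEDist B A ≠ ⊤) : closedBall 0 (ρ / 2) ⊆ B := by
  intro x hx
  by_contra hxB
  obtain ⟨u, hu, c, hc, hcx⟩ := exists_unit_separating hBconv hBclosed hBne hxB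
  have hmem : ρ • u ∈ A := hA (by simp [norm_smul, hu, abs_of_nonneg hρ])
  obtain ⟨y, hy, hyd⟩ := exists_dist_lt_of_hausdorffDist_lt' hmem hdist hfin
  have h1 : inner ℝ u x ≤ ρ / 2 := by
    have := real_inner_le_norm u x
    rw [hu, one_mul] at this
    exact this.trans (by simpa using hx)
  have h2 : inner ℝ u (ρ • u - y) < ρ / 2 := by
    have := real_inner_le_norm u (ρ • u - y)
    rw [hu, one_mul, ← dist_eq_norm, dist_comm] at this
    linarith
  rw [inner_sub_right, inner_smul_right, real_inner_self_eq_norm_sq, hu] at h2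
  linarith [hc y hy]

theorem EuclideanSpace.norm_le_sqrt_card {d : ℕ} {x : EuclideanSpace ℝ (Fin d)}
    (hx : ∀ i, |x i| ≤ 1) : ‖x‖ ≤ √d := by
  rw [EuclideanSpace.norm_eq]
  refine Real.sqrt_le_sqrt ?_
  calc ∑ i, ‖x i‖ ^ 2 ≤ ∑ _i : Fin d, (1 : ℝ) :=
        Finset.sum_le_sum fun i _ => pow_le_one₀ (norm_nonneg _) (hx i)
    _ = d := by simp

/-- A set containing the unit cubes anchored at finitely many lattice points has volume at least
the number of those points. -/
theorem card_le_volume_of_lattice {d : ℕ} (S : Finset (EuclideanSpace ℝ (Fin d)))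
    (hS : ∀ z ∈ S, IsLatticePt z) {C : Set (EuclideanSpace ℝ (Fin d))}
    (hC : ∀ z ∈ S, ∀ c : EuclideanSpace ℝ (Fin d), (∀ i, c i ∈ Icc (0 : ℝ) 1) → z + c ∈ C) :
    (S.card : ENNReal) ≤ volume C := by
  let Q : Set (EuclideanSpace ℝ (Fin d)) := WithLp.ofLp ⁻¹' Set.pi univ fun _ => Ico (0 : ℝ) 1
  have hQ : MeasurableSet (Set.pi univ fun _ : Fin d => Ico (0 : ℝ) 1) :=
    MeasurableSet.univ_pi fun _ => measurableSet_Ico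
  have hQmeas : MeasurableSet Q := (PiLp.volume_preserving_ofLp (Fin d)).measurable hQ
  have hQvol : volume Q = 1 := by
    rw [(PiLp.volume_preserving_ofLp (Fin d)).measure_preimage hQ.nullMeasurableSet,
      Real.volume_pi_Ico]
    simp
  have hdisj : (S : Set (EuclideanSpace ℝ (Fin d))).PairwiseDisjoint
      fun z => (fun x => -z + x) ⁻¹' Q := by
    intro z hz w hw hzw
    refine disjoint_left.2 fun x hxz hxw => hzw ?_
    ext i
    obtain ⟨m, hm⟩ := hS z hz i
    obtain ⟨n, hn⟩ := hS w hw i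
    have h1 := hxz i (mem_univ i)
    have h2 := hxw i (mem_univ i)
    simp only [WithLp.ofLp_add, WithLp.ofLp_neg, Pi.add_apply, Pi.neg_apply, hm, hn, mem_Ico]
      at h1 h2
    have hfm : ⌊x i⌋ = m := Int.floor_eq_iff.2 ⟨by linarith, by linarith⟩
    have hfn : ⌊x i⌋ = n := Int.floor_eq_iff.2 ⟨by linarith, by linarith⟩
    rw [hm, hn, ← hfm, ← hfn]
  calc (S.card : ENNReal) = ∑ z ∈ S, volume ((fun x => -z + x) ⁻¹' Q) := by
        simp [measure_preimage_add, hQvol]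
    _ = volume (⋃ z ∈ S, (fun x => -z + x) ⁻¹' Q) :=
        (measure_biUnion_finset hdisj fun z _ => (measurable_const_add (-z)) hQmeas).symm
    _ ≤ volume C := measure_mono (iUnion₂_subset fun z hz x hx => by
        have := hC z hz (-z + x) fun i => Ico_subset_Icc_self (hx i (mem_univ i))
        simpa using this)

/-- The number of lattice points in the inner morphological boundary of a convex body `J`
containing a large ball is controlled by the perimeter of `J`. -/
theorem card_lattice_inner_boundary_le {k : ℕ} {J I : Set (EuclideanSpace ℝ (Fin (k + 1)))}
    (hJc : IsCompact J) (hJconv : Convex ℝ J) (hIc : IsCompact I)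
    (hI0 : (0 : EuclideanSpace ℝ (Fin (k + 1))) ∈ I) {ε R : ℝ} (hε : 0 < ε)
    (hR : √(k + 1 : ℕ) < ε * R) (hball : closedBall 0 R ⊆ J) :
    (((J \ erode J I) ∩ {u | IsLatticePt u}).ncard : ENNReal) ≤
      ENNReal.ofReal (diam I + √(k + 1 : ℕ)) *
        (ENNReal.ofReal ((1 + ε) ^ k) * μH[k] (frontier J)) := by
  set S := (J \ erode J I) ∩ {u | IsLatticePt u}
  rcases S.infinite_or_finite with hinf | hfin
  · simp [hinf.ncard]
  have hRpos : 0 < R := by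
    have : 0 < ε * R := (Real.sqrt_nonneg _).trans_lt hR
    exact pos_of_mul_pos_right this hε.le
  have hJne : J.Nonempty := ⟨0, hball (by simp [hRpos.le])⟩
  let Q : Set (EuclideanSpace ℝ (Fin (k + 1))) := {c | ∀ i, c i ∈ Icc (0 : ℝ) 1}
  have hQ0 : (0 : EuclideanSpace ℝ (Fin (k + 1))) ∈ Q := fun i => by simp
  have hQnorm : Q ⊆ closedBall 0 (√(k + 1 : ℕ)) := fun c hc => by
    rw [mem_closedBall_zero_iff]
    exact EuclideanSpace.norm_le_sqrt_card fun i => abs_le.2 ⟨by linarith [(hc i).1], (hc i).2⟩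
  have hQclosed : IsClosed Q := by
    have : Q = ⋂ i, (fun c : EuclideanSpace ℝ (Fin (k + 1)) => c i) ⁻¹' Icc 0 1 := by
      ext; simp [Q]
    rw [this]
    exact isClosed_iInter fun i => isClosed_Icc.preimage (by fun_prop)
  have hQc : IsCompact Q := (isCompact_closedBall _ _).of_isClosed_subset hQclosed hQnorm
  have hQconv : Convex ℝ Q := fun a ha b hb s t hs ht hst i => by
    simpa using convex_Icc (0 : ℝ) 1 (ha i) (hb i) hs ht hst
  let L := J + Q
  have hLc : IsCompact L := hJc.add hQc
  have hLconv : Convex ℝ L := hJconv.add hQconv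
  have hJL : J ⊆ L := fun x hx => ⟨x, hx, 0, hQ0, by simp⟩
  have hLne : L.Nonempty := hJne.mono hJL
  let M := (1 + ε) • J
  have hMc : IsCompact M := hJc.smul _
  have hLM : L ⊆ interior M := by
    have hM : J + ball 0 (ε * R) ⊆ M := by
      have hM' : M = J + ε • J := by
        simpa using hJconv.add_smul (p := 1) (q := ε) zero_le_one hε.le
      rw [hM']
      refine add_subset_add_left fun x hx => ?_
      refine ⟨ε⁻¹ • x, hball ?_, by simp [smul_smul, hε.ne']⟩
      rw [mem_ball_zero_iff] at hx
      rw [mem_closedBall_zero_iff, norm_smul, norm_inv, Real.norm_of_nonneg hε.le,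
        inv_mul_le_iff₀ hε]
      exact hx.le
    exact (add_subset_add_left (hQnorm.trans (closedBall_subset_ball hR))).trans
      (interior_maximal hM isOpen_ball.add_left)
  let h : EuclideanSpace ℝ (Fin (k + 1)) → ℝ := fun u => sSup ((fun x => inner ℝ u x) '' L)
  have hbdd : ∀ u, BddAbove ((fun x => inner ℝ u x) '' L) := fun u =>
    (hLc.image (by fun_prop : Continuous fun x => inner ℝ u x)).bddAbove
  have hle : ∀ u, ∀ x ∈ L, inner ℝ u x ≤ h u := fun u x hx => le_csSup (hbdd u) ⟨x, hx, rfl⟩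
  have hsup : ∀ u c, (∀ x ∈ L, inner ℝ u x ≤ c) → h u ≤ c := fun u c hc =>
    csSup_le (hLne.image _) (by rintro _ ⟨x, hx, rfl⟩; exact hc x hx)
  have hout : ∀ z ∈ frontier M, ∃ u : EuclideanSpace ℝ (Fin (k + 1)),
      ‖u‖ = 1 ∧ h u < inner ℝ u z := by
    intro z hz
    obtain ⟨u, hu, c, hc, hcz⟩ := exists_unit_separating hLconv hLc.isClosed hLne
      (fun hzL => hz.2 (hLM hzL))
    exact ⟨u, hu, (hsup u c hc).trans_lt hcz⟩
  choose! U hU1 hU using hout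
  have hdeep : ∀ z ∈ S, ∃ u : EuclideanSpace ℝ (Fin (k + 1)), ‖u‖ = 1 ∧
      ∀ c ∈ Q, h u - inner ℝ u (z + c) ≤ diam I + √(k + 1 : ℕ) := by
    rintro z ⟨⟨hzJ, hze⟩, -⟩
    obtain ⟨i, hi, hzi⟩ : ∃ i ∈ I, z + i ∉ J := by
      simpa [erode] using hze
    obtain ⟨u, hu, a, ha, hau⟩ := exists_unit_separating hJconv hJc.isClosed hJne hzi
    refine ⟨u, hu, fun c hc => ?_⟩
    rw [sub_le_iff_le_add]
    refine hsup u _ ?_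
    rintro _ ⟨j, hj, c', hc', rfl⟩
    have h1 : inner ℝ u i ≤ diam I := by
      have h2 := real_inner_le_norm u i
      have h3 := dist_le_diam_of_mem hIc.isBounded hi hI0
      rw [hu, one_mul] at h2
      rw [dist_zero_right] at h3
      exact h2.trans h3
    have h2 : inner ℝ u (c' - c) ≤ √(k + 1 : ℕ) := by
      have h3 := real_inner_le_norm u (c' - c)
      rw [hu, one_mul] at h3
      refine h3.trans (EuclideanSpace.norm_le_sqrt_card fun i => ?_)
      simp only [PiLp.sub_apply]
      exact abs_le.2 ⟨by linarith [(hc i).2, (hc' i).1], by linarith [(hc i).1, (hc' i).2]⟩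
    have h3 := ha j hj
    simp only [inner_add_right, inner_sub_right] at *
    linarith
  choose! V hV1 hV using hdeep
  obtain ⟨t, ht, hcov⟩ := (hMc.of_isClosed_subset isClosed_frontier
    hMc.isClosed.frontier_subset).elim_nhds_subcover (fun z => {x | h (U z) < inner ℝ (U z) x})
    fun z hz => (isOpen_lt continuous_const (by fun_prop)).mem_nhds (hU z hz)
  classical
  let T := t.image U ∪ hfin.toFinset.image V
  have hT : ∀ u ∈ T, ‖u‖ = 1 := by
    intro u hu
    rcases Finset.mem_union.1 hu with hu | hu
    · obtain ⟨z, hz, rfl⟩ := Finset.mem_image.1 hu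
      exact hU1 z (ht z hz)
    · obtain ⟨z, hz, rfl⟩ := Finset.mem_image.1 hu
      exact hV1 z (hfin.mem_toFinset.1 hz)
  set P := {x | ∀ u ∈ T, inner ℝ u x ≤ h u} with hP
  have hLP : L ⊆ P := fun x hx u _ => hle u x hx
  have hPeq : P = ⋂ u ∈ T, {x | inner ℝ u x ≤ h u} := by ext; simp [hP]
  have hPclosed : IsClosed P := by
    rw [hPeq]
    exact isClosed_biInter fun u _ => isClosed_le (by fun_prop) continuous_const
  have hPconv : Convex ℝ P := by
    rw [hPeq]
    exact convex_iInter₂ fun u _ => convex_halfSpace_le (innerₗ _ u).isLinear _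
  have hPint : (interior P).Nonempty :=
    ⟨0, interior_mono (hball.trans (hJL.trans hLP))
      (ball_subset_interior_closedBall (mem_ball_self hRpos))⟩
  have hPM : P ⊆ M := by
    by_contra hnot
    obtain ⟨x, hxP, hxM⟩ := not_subset.1 hnot
    obtain ⟨y, hy⟩ := hLne
    obtain ⟨z, hzP, hzM⟩ := hPconv.isPreconnected.inter_frontier_nonempty
      ⟨y, hLP hy, interior_subset (hLM hy)⟩ ⟨x, hxP, hxM⟩
    obtain ⟨w, hw, hzw⟩ := mem_iUnion₂.1 (hcov hzM)
    exact absurd (hzP (U w) (Finset.mem_union_left _ (Finset.mem_image_of_mem U hw)))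
      (not_le.2 hzw)
  have hk : (0 : ℝ) ≤ k := k.cast_nonneg
  have hper : μH[k] (frontier P) ≤ ENNReal.ofReal ((1 + ε) ^ k) * μH[k] (frontier J) := by
    refine (hPconv.hausdorffMeasure_frontier_mono hPclosed hPint hPM hMc.isBounded hk).trans ?_
    have h1 : (1 + ε) ≠ 0 := by positivity
    have hfr : frontier M = (1 + ε) • frontier J :=
      ((Homeomorph.smulOfNeZero (1 + ε) h1).image_frontier J).symm
    rw [hfr, Measure.hausdorffMeasure_smul₀ hk h1, ENNReal.smul_def, smul_eq_mul]
    gcongr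
    rw [NNReal.rpow_natCast, ENNReal.coe_pow, ENNReal.ofReal_pow (by positivity),
      ← enorm_eq_nnnorm, Real.enorm_of_nonneg (by positivity)]
  rw [ncard_eq_toFinset_card S hfin]
  calc (hfin.toFinset.card : ENNReal)
      ≤ volume {x | x ∈ P ∧ ∃ u ∈ T, h u - inner ℝ u x ≤ diam I + √(k + 1 : ℕ)} := by
        refine card_le_volume_of_lattice _ (fun z hz => (hfin.mem_toFinset.1 hz).2) ?_
        intro z hz c hc
        have hzS := hfin.mem_toFinset.1 hz
        exact ⟨hLP ⟨z, hzS.1.1, c, hc, rfl⟩, V z,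
          Finset.mem_union_right _ (Finset.mem_image_of_mem V hz), hV z hzS c hc⟩
    _ ≤ _ := volume_collar_le T hT h _
    _ ≤ _ := by gcongr

theorem stmt15 {d : ℕ} (hd : 2 ≤ d)
    (J : ℕ → Set (EuclideanSpace ℝ (Fin d)))
    (hJ : ∀ n, IsCompact (J n) ∧ Convex ℝ (J n) ∧ 0 ∈ interior (J n))
    (hp : Tendsto (fun n => per (J n)) atTop atTop)
    (Jinf : Set (EuclideanSpace ℝ (Fin d)))
    (hJinfc : IsCompact Jinf) (hJinfconv : Convex ℝ Jinf) (hJinf0 : 0 ∈ interior Jinf)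
    (hJinfper : per Jinf = 1)
    (hconv : Tendsto
      (fun n => hausdorffDist ((per (J n) ^ (-((d : ℝ) - 1)⁻¹)) • J n) Jinf) atTop (𝓝 0))
    (I : Set (EuclideanSpace ℝ (Fin d)))
    (hIc : IsCompact I) (hIconv : Convex ℝ I) (hI0 : (0 : EuclideanSpace ℝ (Fin d)) ∈ I) :
    Filter.limsup
        (fun n =>
          (((J n \ erode (J n) I) ∩ {u | IsLatticePt u}).ncard : ℝ) / per (J n)) atTop
      ≤ Metric.diam I + Real.sqrt d := by
  obtain ⟨k, rfl⟩ : ∃ k, d = k + 1 := ⟨d - 1, by omega⟩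
  have hk : (0 : ℝ) < k := by
    have : 0 < k := by omega
    exact_mod_cast this
  have hdk : (((k + 1 : ℕ) : ℝ) - 1) = k := by push_cast; ring
  obtain ⟨ρ, hρ, hρJ⟩ : ∃ ρ > 0, closedBall 0 ρ ⊆ Jinf :=
    nhds_basis_closedBall.mem_iff.1 (mem_interior_iff_mem_nhds.1 hJinf0)
  have hballs : ∀ R : ℝ, ∀ᶠ n in atTop, closedBall 0 R ⊆ J n := by
    intro R
    have hscale : Tendsto (fun n => per (J n) ^ (-(((k + 1 : ℕ) : ℝ) - 1)⁻¹)) atTop (𝓝 0) := by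
      rw [hdk]
      exact (tendsto_rpow_neg_atTop (inv_pos.2 hk)).comp hp
    have hsmall : Tendsto (fun n => per (J n) ^ (-(((k + 1 : ℕ) : ℝ) - 1)⁻¹) * R) atTop (𝓝 0) := by
      simpa using hscale.mul_const R
    filter_upwards [hp.eventually_gt_atTop 0, hconv.eventually_lt_const (half_pos hρ),
      hsmall.eventually_lt_const (half_pos hρ)] with n hpn hdn hsn
    obtain ⟨hJc, hJconv, hJ0⟩ := hJ n
    set s := per (J n) ^ (-(((k + 1 : ℕ) : ℝ) - 1)⁻¹)
    have hs : 0 < s := Real.rpow_pos_of_pos hpn _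
    have hsJ : (s • J n).Nonempty := ⟨0, 0, interior_subset hJ0, by simp⟩
    have hsub := (hJconv.smul s).closedBall_subset_of_hausdorffDist_lt hρ.le
      (hJc.smul s).isClosed hsJ hρJ hdn
      (hausdorffEDist_ne_top_of_nonempty_of_bounded hsJ ⟨0, interior_subset hJinf0⟩
        (hJc.smul s).isBounded hJinfc.isBounded)
    intro x hx
    rw [mem_closedBall_zero_iff] at hx
    have hmem : s • x ∈ s • J n := hsub (by
      rw [mem_closedBall_zero_iff, norm_smul, Real.norm_of_nonneg hs.le]
      nlinarith)
    exact (smul_mem_smul_set_iff₀ hs.ne' _ _).1 hmem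
  have hbound : ∀ ε > 0, Filter.limsup
      (fun n => (((J n \ erode (J n) I) ∩ {u | IsLatticePt u}).ncard : ℝ) / per (J n)) atTop
      ≤ (diam I + √(k + 1 : ℕ)) * (1 + ε) ^ k := by
    intro ε hε
    refine limsup_le_of_le (IsBoundedUnder.isCoboundedUnder_le
      (isBoundedUnder_of ⟨0, fun n => div_nonneg (Nat.cast_nonneg _) ENNReal.toReal_nonneg⟩)) ?_
    filter_upwards [hp.eventually_gt_atTop 0, hballs ((√(k + 1 : ℕ) + 1) / ε)] with n hpn hbn
    obtain ⟨hJc, hJconv, -⟩ := hJ n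
    have hcard := card_lattice_inner_boundary_le hJc hJconv hIc hI0 hε
      (by rw [mul_div_cancel₀ _ hε.ne']; linarith) hbn
    have hper : ENNReal.ofReal (per (J n)) = μH[k] (frontier (J n)) := by
      rw [per, hdk] at *
      exact ENNReal.ofReal_toReal (ENNReal.toReal_pos_iff.1 hpn).2.ne
    have hD : 0 ≤ diam I + √(k + 1 : ℕ) := add_nonneg diam_nonneg (Real.sqrt_nonneg _)
    rw [← hper, ← ENNReal.ofReal_mul (by positivity), ← ENNReal.ofReal_mul hD,
      ← ENNReal.ofReal_natCast, ENNReal.ofReal_le_ofReal_iff (by positivity)] at hcard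
    rw [div_le_iff₀ hpn, mul_assoc]
    exact hcard
  have hlim : Tendsto (fun ε : ℝ => (diam I + √(k + 1 : ℕ)) * (1 + ε) ^ k) (𝓝[>] 0)
      (𝓝 (diam I + √(k + 1 : ℕ))) := by
    have hcont : Continuous fun ε : ℝ => (diam I + √(k + 1 : ℕ)) * (1 + ε) ^ k := by fun_prop
    simpa using (hcont.tendsto 0).mono_left nhdsWithin_le_nhds
  exact ge_of_tendsto hlim (eventually_nhdsWithin_of_forall hbound)
end

section
/- For a cellular automaton f on a ℤ^d-subshift and any convex domain O with 0 in its interior and any real α > 0, the rescaled entropies along the dilated exhaustions agree: limsup_n h_*(f, 𝖯_{nO})/p(nO) = limsup_n h_*(f, 𝖯_{nαO})/p(nαO). -/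
open Set MeasureTheory Filter Topology Pointwise

/-- The group `ℤ^d`. -/
abbrev Zd (d : ℕ) := Fin d → ℤ

/-- Configurations `𝒜^{ℤ^d}` with the product topology (`A` discrete). -/
abbrev Config (A : Type*) (d : ℕ) := Zd d → A

/-- The shift action of `ℤ^d`. -/
def shift {A : Type*} {d : ℕ} (l : Zd d) (x : Config A d) : Config A d := fun k => x (k + l)

/-- Embedding of `ℤ^d` in `ℝ^d`. -/
noncomputable def emb {d : ℕ} (z : Zd d) : EuclideanSpace ℝ (Fin d) :=
  (WithLp.equiv 2 (Fin d → ℝ)).symm fun i => (z i : ℝ)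

/-- The lattice points of a subset `J` of `ℝ^d`, as a subset of `ℤ^d`. -/
def latOf {d : ℕ} (J : Set (EuclideanSpace ℝ (Fin d))) : Set (Zd d) := {z | emb z ∈ J}

/-- Topological entropy `h_top(f, 𝖯_L)` of `f` relative to the partition of `X` into
`L`-cylinders. -/
noncomputable def topPartEnt {A : Type*} {d : ℕ} (f : Config A d → Config A d)
    (X : Set (Config A d)) (L : Set (Zd d)) : ℝ :=
  limsup (fun n : ℕ =>
    Real.log (Nat.card ((fun x => fun (k : Fin n) (j : L) => f^[k] x (j : Zd d)) '' X)) / n)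
    atTop

/-- Measure-theoretic entropy `h_μ(f, 𝖯_L)` of `f` relative to the partition into
`L`-cylinders. -/
noncomputable def measPartEnt {A : Type*} {d : ℕ} [MeasurableSpace A]
    (μ : Measure (Config A d)) (f : Config A d → Config A d) (L : Set (Zd d)) : ℝ :=
  limsup (fun n : ℕ =>
    (∑' Q : Fin n → L → A,
      Real.negMulLog
        (μ {x | ∀ (k : Fin n) (j : L), f^[k] x (j : Zd d) = Q k j}).toReal) / n) atTop

section LimsupComparison

theorem limsup_nonneg_of_nonneg_of_le {u : ℕ → ℝ} {C : ℝ} (h0 : ∀ n, 0 ≤ u n)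
    (hC : ∀ n, u n ≤ C) : 0 ≤ limsup u atTop :=
  le_limsup_of_frequently_le (Frequently.of_forall h0)
    (isBoundedUnder_of ⟨C, hC⟩)

theorem limsup_mono_of_nonneg_of_le {u v : ℕ → ℝ} {C : ℝ} (h0 : ∀ n, 0 ≤ u n)
    (huv : ∀ n, u n ≤ v n) (hC : ∀ n, v n ≤ C) : limsup u atTop ≤ limsup v atTop :=
  limsup_le_limsup (Eventually.of_forall huv)
    (isBoundedUnder_of (r := (· ≥ ·)) ⟨0, h0⟩).isCoboundedUnder_le
    (isBoundedUnder_of ⟨C, hC⟩)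

/-- Comparison of real `limsup`s through eventual upper bounds; no boundedness is required, as
the two sequences are then bounded simultaneously. -/
theorem limsup_eq_of_eventual_bounds {u v : ℕ → ℝ} (hu : ∀ n, 0 ≤ u n) (hv : ∀ n, 0 ≤ v n)
    (huv : ∀ C C', C < C' → (∀ᶠ n in atTop, u n ≤ C) → ∀ᶠ n in atTop, v n ≤ C')
    (hvu : ∀ C C', C < C' → (∀ᶠ n in atTop, v n ≤ C) → ∀ᶠ n in atTop, u n ≤ C') :
    limsup u atTop = limsup v atTop := by
  have bdd : ∀ w : ℕ → ℝ, (∀ n, 0 ≤ w n) → BddBelow {C | ∀ᶠ n in atTop, w n ≤ C} := by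
    intro w hw
    refine ⟨0, fun C hC => ?_⟩
    obtain ⟨n, hn⟩ := hC.exists
    exact (hw n).trans hn
  have key : ∀ u v : ℕ → ℝ, (∀ n, 0 ≤ v n) → {C | ∀ᶠ n in atTop, u n ≤ C}.Nonempty →
      (∀ C C', C < C' → (∀ᶠ n in atTop, u n ≤ C) → ∀ᶠ n in atTop, v n ≤ C') →
      sInf {C | ∀ᶠ n in atTop, v n ≤ C} ≤ sInf {C | ∀ᶠ n in atTop, u n ≤ C} := by
    intro u v hv hne h
    refine le_csInf hne fun C hC => le_of_forall_gt_imp_ge_of_dense fun C' hC' => ?_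
    exact csInf_le (bdd v hv) (h C C' hC' hC)
  rw [limsup_eq, limsup_eq]
  by_cases hne : {C | ∀ᶠ n in atTop, u n ≤ C}.Nonempty
  · have hne' : {C | ∀ᶠ n in atTop, v n ≤ C}.Nonempty := by
      obtain ⟨C, hC⟩ := hne
      exact ⟨C + 1, huv C _ (lt_add_one C) hC⟩
    exact le_antisymm (key v u hu hne' hvu) (key u v hv hne huv)
  · have hne' : ¬ {C | ∀ᶠ n in atTop, v n ≤ C}.Nonempty := by
      rintro ⟨C, hC⟩
      exact hne ⟨C + 1, hvu C _ (lt_add_one C) hC⟩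
    rw [not_nonempty_iff_eq_empty.1 hne, not_nonempty_iff_eq_empty.1 hne']

theorem tendsto_mul_ceil_div {a b : ℝ} (ha : 0 < a) (hb : 0 < b) :
    Tendsto (fun n : ℕ => b * (⌈a * n / b⌉₊ : ℝ) / (a * n)) atTop (𝓝 1) := by
  have h1 : Tendsto (fun n : ℕ => 1 + b / (a * n)) atTop (𝓝 1) := by
    have : Tendsto (fun n : ℕ => b / (a * n)) atTop (𝓝 0) :=
      tendsto_const_nhds.div_atTop (tendsto_natCast_atTop_atTop.const_mul_atTop ha)
    simpa using this.const_add 1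
  refine tendsto_of_tendsto_of_tendsto_of_le_of_le' tendsto_const_nhds h1 ?_ ?_
  · filter_upwards [eventually_gt_atTop 0] with n hn
    have hn' : (0 : ℝ) < n := by exact_mod_cast hn
    rw [le_div_iff₀ (by positivity), one_mul, ← div_le_iff₀' hb]
    exact Nat.le_ceil _
  · filter_upwards [eventually_gt_atTop 0] with n hn
    have hn' : (0 : ℝ) < n := by exact_mod_cast hn
    have h := (Nat.ceil_lt_add_one (show 0 ≤ a * n / b by positivity)).le
    have h2 := mul_le_mul_of_nonneg_left h hb.le
    rw [div_le_iff₀ (by positivity)]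
    refine h2.trans (le_of_eq ?_)
    field_simp

/-- Sampling a monotone function, normalised by a power, along two arithmetic progressions. -/
theorem eventually_le_of_monotone_div_pow {H : ℝ → ℝ}
    (hmono : ∀ s t, 0 ≤ s → s ≤ t → H s ≤ H t) {c : ℝ} (hc : 0 < c) (k : ℕ) {a b : ℝ}
    (ha : 0 < a) (hb : 0 < b) (C C' : ℝ) (hCC' : C < C')
    (hC : ∀ᶠ n : ℕ in atTop, H (b * n) / (c * (b * n) ^ k) ≤ C) :
    ∀ᶠ n : ℕ in atTop, H (a * n) / (c * (a * n) ^ k) ≤ C' := by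
  have hm : Tendsto (fun n : ℕ => ⌈a * n / b⌉₊) atTop atTop :=
    tendsto_nat_ceil_atTop.comp
      ((tendsto_natCast_atTop_atTop.const_mul_atTop ha).atTop_div_const hb)
  have hr : Tendsto (fun n : ℕ => C * (b * (⌈a * n / b⌉₊ : ℝ) / (a * n)) ^ k) atTop (𝓝 C) := by
    simpa using ((tendsto_mul_ceil_div ha hb).pow k).const_mul C
  filter_upwards [hm.eventually hC, hr.eventually_lt_const hCC', eventually_gt_atTop 0]
    with n hn hlt hpos
  have hn' : (0 : ℝ) < n := by exact_mod_cast hpos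
  have hle : a * n ≤ b * (⌈a * n / b⌉₊ : ℝ) := by
    rw [← div_le_iff₀' hb]
    exact Nat.le_ceil _
  have han : 0 < a * n := by positivity
  have hbm : 0 < b * (⌈a * n / b⌉₊ : ℝ) := han.trans_le hle
  refine le_trans ?_ hlt.le
  rw [div_le_iff₀ (by positivity)] at hn ⊢
  refine (hmono _ _ han.le hle).trans (hn.trans (le_of_eq ?_))
  rw [div_pow]
  field_simp

theorem limsup_monotone_div_pow_eq {H : ℝ → ℝ} (h0 : ∀ t, 0 ≤ t → 0 ≤ H t)
    (hmono : ∀ s t, 0 ≤ s → s ≤ t → H s ≤ H t) {c : ℝ} (hc : 0 < c) (k : ℕ) {a b : ℝ}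
    (ha : 0 < a) (hb : 0 < b) :
    limsup (fun n : ℕ => H (a * n) / (c * (a * n) ^ k)) atTop
      = limsup (fun n : ℕ => H (b * n) / (c * (b * n) ^ k)) atTop := by
  refine limsup_eq_of_eventual_bounds (fun n => ?_) (fun n => ?_)
    (eventually_le_of_monotone_div_pow hmono hc k hb ha)
    (eventually_le_of_monotone_div_pow hmono hc k ha hb)
  · have := h0 (a * n) (by positivity)
    positivity
  · have := h0 (b * n) (by positivity)
    positivity

end LimsupComparison

section Geometry

theorem latOf_mono {d : ℕ} {J J' : Set (EuclideanSpace ℝ (Fin d))} (h : J ⊆ J') :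
    latOf J ⊆ latOf J' := fun _ hz => h hz

theorem latOf_finite {d : ℕ} {J : Set (EuclideanSpace ℝ (Fin d))}
    (hJ : Bornology.IsBounded J) : (latOf J).Finite := by
  obtain ⟨R, hR⟩ := hJ.exists_norm_le
  refine (Set.finite_Icc (fun _ : Fin d => -⌈R⌉) (fun _ => ⌈R⌉)).subset fun z hz => ?_
  have h : ∀ i, |(z i : ℝ)| ≤ (⌈R⌉ : ℝ) := fun i =>
    calc |(z i : ℝ)| = ‖emb z i‖ := rfl
      _ ≤ ‖emb z‖ := PiLp.norm_apply_le _ _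
      _ ≤ R := hR _ hz
      _ ≤ ⌈R⌉ := Int.le_ceil R
  refine ⟨fun i => ?_, fun i => ?_⟩
  · exact_mod_cast (abs_le.1 (h i)).1
  · exact_mod_cast (abs_le.1 (h i)).2

theorem smul_subset_smul_of_convex {E : Type*} [AddCommGroup E] [Module ℝ E] {O : Set E}
    (hO : Convex ℝ O) (h0 : (0 : E) ∈ O) {s t : ℝ} (hs : 0 ≤ s) (hst : s ≤ t) :
    s • O ⊆ t • O := by
  rintro _ ⟨x, hx, rfl⟩
  rcases hs.eq_or_lt with rfl | hs'
  · exact ⟨0, h0, by simp⟩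
  · have ht : 0 < t := hs'.trans_le hst
    refine ⟨(s / t) • x, hO.smul_mem_of_zero_mem h0 hx
      ⟨by positivity, (div_le_one ht).2 hst⟩, ?_⟩
    simp only [smul_smul]
    congr 1
    field_simp

theorem per_smul {k : ℕ} (O : Set (EuclideanSpace ℝ (Fin (k + 1)))) {t : ℝ} (ht : 0 < t) :
    per (t • O) = per O * t ^ k := by
  have hfr : frontier (t • O) = t • frontier O :=
    ((Homeomorph.smulOfNeZero t ht.ne').image_frontier O).symm
  have hk : ((k + 1 : ℕ) : ℝ) - 1 = k := by push_cast; ring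
  rw [per, per, hfr, hk, Measure.hausdorffMeasure_smul₀ (Nat.cast_nonneg k) ht.ne']
  rw [ENNReal.smul_def, smul_eq_mul, ENNReal.toReal_mul, mul_comm]
  simp [abs_of_pos ht]

theorem limsup_set_function_div_per_eq {d : ℕ} (h : Set (Zd d) → ℝ)
    (h0 : ∀ L, L.Finite → 0 ≤ h L) (hmono : ∀ L L', L'.Finite → L ⊆ L' → h L ≤ h L')
    {O : Set (EuclideanSpace ℝ (Fin d))} (hOc : IsCompact O) (hOconv : Convex ℝ O)
    (hO0 : 0 ∈ O) {α : ℝ} (hα : 0 < α) :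
    limsup (fun n : ℕ => h (latOf ((n : ℝ) • O)) / per ((n : ℝ) • O)) atTop
      = limsup (fun n : ℕ => h (latOf ((n : ℝ) • α • O)) / per ((n : ℝ) • α • O)) atTop := by
  rcases d with _ | k
  · have hper : ∀ J : Set (EuclideanSpace ℝ (Fin 0)), per J = 0 := fun J => by simp [per]
    simp [hper]
  have hfin : ∀ t : ℝ, (latOf (t • O)).Finite := fun t => latOf_finite (hOc.smul t).isBounded
  have hleft : (fun n : ℕ => h (latOf ((n : ℝ) • O)) / per ((n : ℝ) • O)) =ᶠ[atTop]
      fun n : ℕ => h (latOf ((1 * n : ℝ) • O)) / (per O * (1 * n : ℝ) ^ k) := by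
    filter_upwards [eventually_gt_atTop 0] with n hn
    rw [one_mul, per_smul O (by exact_mod_cast hn)]
  have hright : (fun n : ℕ => h (latOf ((n : ℝ) • α • O)) / per ((n : ℝ) • α • O)) =ᶠ[atTop]
      fun n : ℕ => h (latOf ((α * n : ℝ) • O)) / (per O * (α * n : ℝ) ^ k) := by
    filter_upwards [eventually_gt_atTop 0] with n hn
    rw [smul_smul, mul_comm (n : ℝ) α,
      per_smul O (mul_pos hα (by exact_mod_cast hn))]
  rw [limsup_congr hleft, limsup_congr hright]
  rcases (show 0 ≤ per O from ENNReal.toReal_nonneg).eq_or_lt with hc | hc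
  · simp [← hc]
  · exact limsup_monotone_div_pow_eq (H := fun t => h (latOf (t • O)))
      (fun t _ => h0 _ (hfin t))
      (fun s t hs hst => hmono _ _ (hfin t)
        (latOf_mono (smul_subset_smul_of_convex hOconv hO0 hs hst))) hc k one_pos hα

end Geometry

section TopologicalEntropy

variable {A : Type*} {d : ℕ} [Fintype A]

theorem log_card_image_div_le (g : Config A d → Config A d) (X : Set (Config A d))
    {L : Set (Zd d)} (hL : L.Finite) (n : ℕ) :
    Real.log (Nat.card ((fun x => fun (k : Fin n) (j : L) => g^[k] x (j : Zd d)) '' X)) / n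
      ≤ Nat.card L * Real.log (Nat.card A) := by
  have := hL.to_subtype
  have hA : 0 ≤ Real.log (Nat.card A) := Real.log_natCast_nonneg _
  refine div_le_of_le_mul₀ (Nat.cast_nonneg n) (by positivity) ?_
  have hcard : Nat.card ((fun x => fun (k : Fin n) (j : L) => g^[k] x (j : Zd d)) '' X)
      ≤ Nat.card A ^ (Nat.card L * n) := by
    refine (Nat.card_le_card_of_injective _ Subtype.val_injective).trans ?_
    simp [Nat.card_fun, pow_mul]
  rcases Nat.eq_zero_or_pos
    (Nat.card ((fun x => fun (k : Fin n) (j : L) => g^[k] x (j : Zd d)) '' X)) with h | h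
  · rw [h]
    simp only [Nat.cast_zero, Real.log_zero]
    positivity
  · refine (Real.log_le_log (by exact_mod_cast h)
      (show _ ≤ ((Nat.card A ^ (Nat.card L * n) : ℕ) : ℝ) by exact_mod_cast hcard)).trans ?_
    push_cast
    rw [Real.log_pow]
    push_cast
    linarith

theorem topPartEnt_nonneg (g : Config A d → Config A d) (X : Set (Config A d))
    {L : Set (Zd d)} (hL : L.Finite) : 0 ≤ topPartEnt g X L :=
  limsup_nonneg_of_nonneg_of_le
    (fun n => div_nonneg (Real.log_natCast_nonneg _) (Nat.cast_nonneg n))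
    (log_card_image_div_le g X hL)

theorem topPartEnt_mono (g : Config A d → Config A d) (X : Set (Config A d))
    {L L' : Set (Zd d)} (hL' : L'.Finite) (hLL' : L ⊆ L') :
    topPartEnt g X L ≤ topPartEnt g X L' := by
  have := hL'.to_subtype
  refine limsup_mono_of_nonneg_of_le
    (fun n => div_nonneg (Real.log_natCast_nonneg _) (Nat.cast_nonneg n)) (fun n => ?_)
    (log_card_image_div_le g X hL')
  refine div_le_div_of_nonneg_right ?_ (Nat.cast_nonneg n)
  have himage : (fun x => fun (k : Fin n) (j : L) => g^[k] x (j : Zd d)) '' X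
      = (fun (Q : Fin n → L' → A) k (j : L) => Q k ⟨j, hLL' j.2⟩) ''
        ((fun x => fun (k : Fin n) (j : L') => g^[k] x (j : Zd d)) '' X) := by
    rw [image_image]
  have hcard := Nat.card_image_le
    (f := fun (Q : Fin n → L' → A) k (j : L) => Q k ⟨j, hLL' j.2⟩)
    (Set.toFinite ((fun x => fun (k : Fin n) (j : L') => g^[k] x (j : Zd d)) '' X))
  rw [← himage] at hcard
  rcases Nat.eq_zero_or_pos
    (Nat.card ((fun x => fun (k : Fin n) (j : L) => g^[k] x (j : Zd d)) '' X)) with h | h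
  · rw [h]
    simpa using Real.log_natCast_nonneg _
  · exact Real.log_le_log (by exact_mod_cast h) (by exact_mod_cast hcard)

end TopologicalEntropy

section MeasureEntropy

theorem negMulLog_sum_le {ι : Type*} (s : Finset ι) (p : ι → ℝ) (hp : ∀ i ∈ s, 0 ≤ p i) :
    Real.negMulLog (∑ i ∈ s, p i) ≤ ∑ i ∈ s, Real.negMulLog (p i) := by
  simp only [Real.negMulLog, neg_mul, Finset.sum_neg_distrib, neg_le_neg_iff]
  rw [Finset.sum_mul]
  refine Finset.sum_le_sum fun i hi => ?_
  rcases (hp i hi).eq_or_lt with h | h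
  · simp [← h]
  · exact mul_le_mul_of_nonneg_left (Real.log_le_log h (Finset.single_le_sum hp hi)) h.le

/-- The entropy of a probability vector of length `N` is at most `log N`. -/
theorem sum_negMulLog_le_log_card {ι : Type*} [Fintype ι] (p : ι → ℝ) (hp : ∀ i, 0 ≤ p i)
    (hsum : ∑ i, p i = 1) : ∑ i, Real.negMulLog (p i) ≤ Real.log (Fintype.card ι) := by
  have hN : (0 : ℝ) < Fintype.card ι := by
    have : Nonempty ι := by
      by_contra h
      rw [not_nonempty_iff] at h
      simp at hsum
    exact_mod_cast Fintype.card_pos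
  have hterm : ∀ i, Real.negMulLog (p i)
      ≤ p i * Real.log (Fintype.card ι) + ((Fintype.card ι : ℝ)⁻¹ - p i) := by
    intro i
    rcases (hp i).eq_or_lt with h | h
    · simp [← h]
    · have hlog := Real.log_le_sub_one_of_pos (x := (p i * Fintype.card ι)⁻¹) (by positivity)
      rw [Real.log_inv, Real.log_mul h.ne' hN.ne'] at hlog
      have hmul := mul_le_mul_of_nonneg_left hlog h.le
      have hinv : p i * ((p i * (Fintype.card ι : ℝ))⁻¹ - 1)
          = (Fintype.card ι : ℝ)⁻¹ - p i := by
        field_simp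
      rw [hinv] at hmul
      rw [Real.negMulLog]
      linarith
  refine (Finset.sum_le_sum fun i _ => hterm i).trans (le_of_eq ?_)
  rw [Finset.sum_add_distrib, ← Finset.sum_mul, Finset.sum_sub_distrib, hsum]
  simp [hN.ne']

/-- Coarsening a finite measurable partition does not increase its entropy. -/
theorem sum_negMulLog_comp_le {Ω β γ : Type*} [MeasurableSpace Ω] (μ : Measure Ω)
    [IsFiniteMeasure μ] [Fintype β] [Fintype γ] (φ : Ω → β) (r : β → γ)
    (hφ : ∀ b, MeasurableSet (φ ⁻¹' {b})) :
    ∑ c, Real.negMulLog (μ.real ((r ∘ φ) ⁻¹' {c}))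
      ≤ ∑ b, Real.negMulLog (μ.real (φ ⁻¹' {b})) := by
  classical
  rw [← Finset.sum_fiberwise Finset.univ r]
  refine Finset.sum_le_sum fun c _ => ?_
  have hfiber : μ.real ((r ∘ φ) ⁻¹' {c})
      = ∑ b ∈ Finset.univ.filter (fun b => r b = c), μ.real (φ ⁻¹' {b}) := by
    rw [sum_measureReal_preimage_singleton _ fun b _ => hφ b]
    congr 1
    ext x
    simp
  rw [hfiber]
  exact negMulLog_sum_le _ _ fun b _ => measureReal_nonneg

variable {A : Type*} {d : ℕ}

/-- The itinerary of `x` under `g`, observed on `L` during the first `n` steps. -/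
def itinerary (g : Config A d → Config A d) (L : Set (Zd d)) (n : ℕ) (x : Config A d) :
    Fin n → L → A := fun k j => g^[k] x (j : Zd d)

theorem itinerary_preimage_singleton (g : Config A d → Config A d) (L : Set (Zd d)) (n : ℕ)
    (Q : Fin n → L → A) :
    itinerary g L n ⁻¹' {Q} = {x | ∀ (k : Fin n) (j : L), g^[k] x (j : Zd d) = Q k j} := by
  ext x
  simp [itinerary, funext_iff]

variable [MeasurableSpace A]

theorem measurableSet_itinerary_preimage [DiscreteMeasurableSpace A]
    {g : Config A d → Config A d} (hg : Measurable g) {L : Set (Zd d)} (hL : L.Finite) {n : ℕ}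
    (Q : Fin n → L → A) : MeasurableSet (itinerary g L n ⁻¹' {Q}) := by
  have := hL.to_subtype
  have hinter : itinerary g L n ⁻¹' {Q}
      = ⋂ (k : Fin n) (j : L), (fun x => g^[k] x (j : Zd d)) ⁻¹' {Q k j} := by
    ext x
    simp [itinerary, funext_iff]
  rw [hinter]
  exact MeasurableSet.iInter fun k => MeasurableSet.iInter fun j =>
    ((measurable_pi_apply (j : Zd d)).comp (hg.iterate k))
      (MeasurableSet.of_discrete (s := {Q k j}))

theorem measPartEnt_eq (μ : Measure (Config A d)) (g : Config A d → Config A d)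
    (L : Set (Zd d)) [∀ n, Fintype (Fin n → L → A)] :
    measPartEnt μ g L = limsup (fun n : ℕ =>
      (∑ Q, Real.negMulLog (μ.real (itinerary g L n ⁻¹' {Q}))) / n) atTop := by
  simp only [measPartEnt, tsum_fintype, itinerary_preimage_singleton, Measure.real]

variable {μ : Measure (Config A d)} [IsProbabilityMeasure μ]

theorem sum_negMulLog_itinerary_div_nonneg (g : Config A d → Config A d) (L : Set (Zd d))
    (n : ℕ) [Fintype (Fin n → L → A)] :
    0 ≤ (∑ Q, Real.negMulLog (μ.real (itinerary g L n ⁻¹' {Q}))) / n :=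
  div_nonneg (Finset.sum_nonneg fun _ _ =>
    Real.negMulLog_nonneg measureReal_nonneg measureReal_le_one) (Nat.cast_nonneg n)

variable [Fintype A] [DiscreteMeasurableSpace A]

theorem sum_negMulLog_itinerary_div_le {g : Config A d → Config A d} (hg : Measurable g)
    {L : Set (Zd d)} (hL : L.Finite) (n : ℕ) [Fintype (Fin n → L → A)] :
    (∑ Q, Real.negMulLog (μ.real (itinerary g L n ⁻¹' {Q}))) / n
      ≤ Nat.card L * Real.log (Nat.card A) := by
  have := hL.to_subtype
  have hA : 0 ≤ Real.log (Nat.card A) := Real.log_natCast_nonneg _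
  refine div_le_of_le_mul₀ (Nat.cast_nonneg n) (by positivity) ?_
  refine (sum_negMulLog_le_log_card _ (fun _ => measureReal_nonneg) ?_).trans (le_of_eq ?_)
  · rw [sum_measureReal_preimage_singleton _
      fun Q _ => measurableSet_itinerary_preimage hg hL Q]
    simp
  · rw [← Nat.card_eq_fintype_card, Nat.card_fun, Nat.card_fun, ← pow_mul]
    simp only [Nat.card_eq_fintype_card, Fintype.card_fin, Nat.cast_pow, Real.log_pow,
      Nat.cast_mul]
    ring

theorem measPartEnt_nonneg {g : Config A d → Config A d} (hg : Measurable g)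
    {L : Set (Zd d)} (hL : L.Finite) : 0 ≤ measPartEnt μ g L := by
  classical
  have := hL.fintype
  rw [measPartEnt_eq]
  exact limsup_nonneg_of_nonneg_of_le (fun n => sum_negMulLog_itinerary_div_nonneg g L n)
    (fun n => sum_negMulLog_itinerary_div_le hg hL n)

theorem measPartEnt_mono {g : Config A d → Config A d} (hg : Measurable g)
    {L L' : Set (Zd d)} (hL' : L'.Finite) (hLL' : L ⊆ L') :
    measPartEnt μ g L ≤ measPartEnt μ g L' := by
  classical
  have := hL'.fintype
  have := (hL'.subset hLL').fintype
  rw [measPartEnt_eq, measPartEnt_eq]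
  refine limsup_mono_of_nonneg_of_le (fun n => sum_negMulLog_itinerary_div_nonneg g L n)
    (fun n => ?_) (fun n => sum_negMulLog_itinerary_div_le hg hL' n)
  exact div_le_div_of_nonneg_right
    (sum_negMulLog_comp_le μ (itinerary g L' n) (fun Q k (j : L) => Q k ⟨j, hLL' j.2⟩)
      (measurableSet_itinerary_preimage hg hL')) (Nat.cast_nonneg n)

end MeasureEntropy

theorem stmt18 {d : ℕ} {A : Type*} [Fintype A] [TopologicalSpace A] [DiscreteTopology A]
    [MeasurableSpace A] [DiscreteMeasurableSpace A]
    (X : Set (Config A d)) (hXcl : IsClosed X) (hXne : X.Nonempty)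
    (hXinv : ∀ l : Zd d, ∀ x ∈ X, shift l x ∈ X)
    (f : Config A d → Config A d) (hf : Set.MapsTo f X X) (hfm : Measurable f)
    (hfc : Continuous f)
    (hcomm : ∀ l : Zd d, ∀ x ∈ X, f (shift l x) = shift l (f x))
    (O : Set (EuclideanSpace ℝ (Fin d)))
    (hOc : IsCompact O) (hOconv : Convex ℝ O) (hO0 : 0 ∈ interior O)
    (α : ℝ) (hα : 0 < α) :
    (limsup (fun n : ℕ => topPartEnt f X (latOf ((n : ℝ) • O)) / per ((n : ℝ) • O)) atTop
      = limsup (fun n : ℕ =>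
          topPartEnt f X (latOf ((n : ℝ) • α • O)) / per ((n : ℝ) • α • O)) atTop) ∧
    ∀ μ : Measure (Config A d), IsProbabilityMeasure μ → μ.map f = μ → μ X = 1 →
      limsup (fun n : ℕ => measPartEnt μ f (latOf ((n : ℝ) • O)) / per ((n : ℝ) • O)) atTop
        = limsup (fun n : ℕ =>
            measPartEnt μ f (latOf ((n : ℝ) • α • O)) / per ((n : ℝ) • α • O)) atTop := by
  have hO : (0 : EuclideanSpace ℝ (Fin d)) ∈ O := interior_subset hO0
  refine ⟨limsup_set_function_div_per_eq (topPartEnt f X) (fun L hL => topPartEnt_nonneg f X hL)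
    (fun L L' hL' hLL' => topPartEnt_mono f X hL' hLL') hOc hOconv hO hα, ?_⟩
  intro μ _ _ _
  exact limsup_set_function_div_per_eq (measPartEnt μ f) (fun L hL => measPartEnt_nonneg hfm hL)
    (fun L L' hL' hLL' => measPartEnt_mono hfm hL' hLL') hOc hOconv hO hα
end
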